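/- There is a bijection between the symmetric group Sₙ (permutations of Fin n) and the set of pairs (a, f), where a is an integer with 0 ≤ a ≤ n−1 and f : {1,…,a} → {1,…,n} is an injective map satisfying: a = 0, or there exists a position p ∈ {1,…,n} with p < f(a) and p not in the image of f. Explicitly, the map sending a permutation π to the pair (m(π)−1, π⁻¹ restricted to {1, …, m(π)−1}) is such a bijection; in particular, the total number of such pairs (a, f) equals n!. -/

import Mathlib

/-- A permutation `π` of `Fin n` is a *term of `B a`* if `π⁻¹` is strictly increasing
on the last `n - a` points `{a+1, …, n}` (zero-indexed: indices `≥ a`). -/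
def isTerm (n a : ℕ) (π : Equiv.Perm (Fin n)) : Prop :=
  ∀ i j : Fin n, a ≤ (i : ℕ) → a ≤ (j : ℕ) → i < j → π⁻¹ i < π⁻¹ j

/-- `m(π)`: the smallest `m ∈ {1, …, n}` such that `π⁻¹` is strictly increasing on
`{m, m+1, …, n}`; equivalently `1` plus the smallest `c` with `π` a term of `B c`. -/
noncomputable def mval (n : ℕ) (π : Equiv.Perm (Fin n)) : ℕ :=
  1 + sInf {c : ℕ | isTerm n c π}

/-- A pair `(a, f)` with `0 ≤ a ≤ n - 1` and `f : {1,…,a} → {1,…,n}` injective, such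
that `a = 0` or there is a position `p` outside the image of `f` with `p < f(a)`. -/
structure InjPair (n : ℕ) where
  /-- the number of cards removed -/
  a : ℕ
  ha : a ≤ n - 1
  /-- the positions to which the removed cards `1, …, a` are sent -/
  f : Fin a → Fin n
  hf : Function.Injective f
  cond : a = 0 ∨ ∃ p : Fin n, (∀ i, f i ≠ p) ∧ ∃ h : a - 1 < a, p < f ⟨a - 1, h⟩

/-!
An injection `f : Fin a → Fin n` has exactly one extension to a permutation of `Fin n` that is
increasing on `{i | a ≤ i}`: that permutation lists the positions missed by `f` in increasing order.
Hence `f` is the restriction of `π⁻¹` for exactly one term `π` of `B a`. Such a `π` fails to be a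
term of `B (a - 1)` exactly when `π⁻¹` takes some position free of `f` below its value at the last
removed card, and this is the condition imposed on the pair `(a, f)`.
-/

open Set

section SortedExtension

variable {α β γ : Type*} {ι : γ → α} {f : γ → β}

theorem equiv_eq_of_comp_eq_of_strictMonoOn [LinearOrder α] [WellFoundedLT α] [Preorder β]
    {σ τ : α ≃ β} (hσ : StrictMonoOn σ (range ι)ᶜ) (hτ : StrictMonoOn τ (range ι)ᶜ)
    (h : σ ∘ ι = τ ∘ ι) : σ = τ := by
  have image_eq : σ '' (range ι)ᶜ = τ '' (range ι)ᶜ := by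
    rw [image_compl_eq σ.bijective, image_compl_eq τ.bijective, ← range_comp, ← range_comp, h]
  have restrict_eq : (range ι)ᶜ.domRestrict σ = (range ι)ᶜ.domRestrict τ :=
    (hσ.domRestrict.range_inj hτ.domRestrict).1 (by simpa only [range_domRestrict] using image_eq)
  ext x
  by_cases hx : x ∈ range ι
  · obtain ⟨c, rfl⟩ := hx
    exact congrFun h c
  · exact congrFun restrict_eq ⟨x, hx⟩

variable [LinearOrder α] [LinearOrder β] [Fintype α] [Fintype β]

theorem exists_equiv_comp_eq_strictMonoOn (hcard : Fintype.card α = Fintype.card β)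
    (hι : ι.Injective) (hf : f.Injective) :
    ∃ σ : α ≃ β, σ ∘ ι = f ∧ StrictMonoOn σ (range ι)ᶜ := by
  classical
  let onRange : range ι ≃ range f := (Equiv.ofInjective ι hι).symm.trans (.ofInjective f hf)
  have card_compl : Fintype.card ↥(range f)ᶜ = Fintype.card ↥(range ι)ᶜ := by
    rw [Fintype.card_compl_set, Fintype.card_compl_set, hcard, Fintype.card_congr onRange]
  let onCompl : ↥(range ι)ᶜ ≃o ↥(range f)ᶜ :=
    (Fintype.orderIsoFinOfCardEq _ rfl).symm.trans (Fintype.orderIsoFinOfCardEq _ card_compl)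
  let σ : α ≃ β := (Equiv.Set.sumCompl (range ι)).symm.trans
    ((onRange.sumCongr onCompl.toEquiv).trans (Equiv.Set.sumCompl (range f)))
  have σ_compl (x : ↥(range ι)ᶜ) : σ x = onCompl x := by
    simp [σ, Equiv.Set.sumCompl_symm_apply_compl]
  refine ⟨σ, funext fun c => ?_, fun x hx y hy hxy => ?_⟩
  · simp [σ, onRange, Equiv.Set.sumCompl_symm_apply_of_mem (mem_range_self c),
      Equiv.ofInjective_symm_apply]
  · rw [σ_compl ⟨x, hx⟩, σ_compl ⟨y, hy⟩]
    exact onCompl.strictMono hxy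

theorem existsUnique_equiv_comp_eq_strictMonoOn (hcard : Fintype.card α = Fintype.card β)
    (hι : ι.Injective) (hf : f.Injective) :
    ∃! σ : α ≃ β, σ ∘ ι = f ∧ StrictMonoOn σ (range ι)ᶜ := by
  refine existsUnique_of_exists_of_unique (exists_equiv_comp_eq_strictMonoOn hcard hι hf) ?_
  rintro σ τ ⟨hσf, hσ⟩ ⟨hτf, hτ⟩
  exact equiv_eq_of_comp_eq_of_strictMonoOn hσ hτ (hσf.trans hτf.symm)

end SortedExtension

section InjPair

variable {n a : ℕ} {π : Equiv.Perm (Fin n)}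

theorem isTerm_iff_strictMonoOn (ha : a ≤ n) :
    isTerm n a π ↔ StrictMonoOn ⇑π⁻¹ (range (Fin.castLE ha))ᶜ := by
  simp only [isTerm, StrictMonoOn, Fin.range_castLE, mem_compl_iff, mem_ofPred_eq, not_lt]
  exact ⟨fun h i hi j hj => h i j hi hj, fun h i j hi hj => h hi hj⟩

theorem isTerm.mono {b : ℕ} (h : isTerm n a π) (hab : a ≤ b) : isTerm n b π :=
  fun i j hi hj => h i j (hab.trans hi) (hab.trans hj)

theorem isTerm_sub_one (π : Equiv.Perm (Fin n)) : isTerm n (n - 1) π := by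
  intro i j hi hj hij
  omega

theorem not_isTerm_iff_of_isTerm_succ {k : Fin n} (h : isTerm n (k + 1) π) :
    ¬ isTerm n k π ↔ ∃ j, k < j ∧ π⁻¹ j < π⁻¹ k := by
  constructor
  · contrapose!
    intro hk i j hi _ hij
    obtain rfl | hki := (show k ≤ i from hi).eq_or_lt
    · exact (hk j hij).lt_of_ne (π⁻¹.injective.ne hij.ne)
    · exact h i j hki (hki.trans hij) hij
  · rintro ⟨j, hkj, hdesc⟩ hk
    exact hdesc.asymm (hk k j le_rfl hkj.le hkj)

theorem forall_castLE_ne_iff (ha : a ≤ n) (j : Fin n) :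
    (∀ i : Fin a, Fin.castLE ha i ≠ j) ↔ a ≤ j := by
  simpa only [mem_range, not_exists, mem_ofPred_eq, not_lt] using
    (Set.ext_iff.1 (Fin.range_castLE ha) j).not

/-- The condition on the map of an `InjPair`: the last value of `f`, if any, lies above some
position outside the image of `f`. -/
def LastExceedsFree (f : Fin a → Fin n) : Prop :=
  a = 0 ∨ ∃ p : Fin n, (∀ i, f i ≠ p) ∧ ∃ h : a - 1 < a, p < f ⟨a - 1, h⟩

theorem lastExceedsFree_iff_of_isTerm (ha : a ≤ n) (h : isTerm n a π) :
    LastExceedsFree (⇑π⁻¹ ∘ Fin.castLE ha) ↔ a = 0 ∨ ¬ isTerm n (a - 1) π := by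
  cases a with
  | zero => simp [LastExceedsFree]
  | succ k =>
    have descent_iff := not_isTerm_iff_of_isTerm_succ (k := ⟨k, ha⟩) h
    rw [LastExceedsFree, Nat.add_sub_cancel, or_iff_right k.succ_ne_zero,
      or_iff_right k.succ_ne_zero, descent_iff, π⁻¹.surjective.exists]
    simp only [Function.comp_apply, π⁻¹.injective.ne_iff, forall_castLE_ne_iff,
      exists_prop_of_true k.lt_succ_self]
    rfl

/-- The paper's `m(π) - 1`: the least number of top cards whose removal and reinsertion can
produce the deck `π`. -/
noncomputable def minRemoved (π : Equiv.Perm (Fin n)) : ℕ :=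
  sInf {c | isTerm n c π}

theorem mval_sub_one (π : Equiv.Perm (Fin n)) : mval n π - 1 = minRemoved π :=
  Nat.add_sub_cancel_left 1 _

theorem minRemoved_le (π : Equiv.Perm (Fin n)) : minRemoved π ≤ n - 1 :=
  Nat.sInf_le (isTerm_sub_one π)

theorem isTerm_minRemoved (π : Equiv.Perm (Fin n)) : isTerm n (minRemoved π) π :=
  Nat.sInf_mem (s := {c | isTerm n c π}) ⟨n - 1, isTerm_sub_one π⟩

theorem isTerm_iff_minRemoved_le : isTerm n a π ↔ minRemoved π ≤ a :=
  ⟨fun h => Nat.sInf_le h, (isTerm_minRemoved π).mono⟩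

theorem minRemoved_eq_iff (ha : a ≤ n) :
    minRemoved π = a ↔ isTerm n a π ∧ LastExceedsFree (⇑π⁻¹ ∘ Fin.castLE ha) := by
  rw [and_congr_right (lastExceedsFree_iff_of_isTerm ha), isTerm_iff_minRemoved_le,
    isTerm_iff_minRemoved_le]
  omega

theorem InjPair.a_le (P : InjPair n) : P.a ≤ n :=
  P.ha.trans (Nat.sub_le n 1)

/-- The map `π ↦ (m(π) - 1, π⁻¹ restricted to the first m(π) - 1 cards)`. -/
noncomputable def toInjPair (π : Equiv.Perm (Fin n)) : InjPair n where
  a := minRemoved π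
  ha := minRemoved_le π
  f := ⇑π⁻¹ ∘ Fin.castLE ((minRemoved_le π).trans (Nat.sub_le n 1))
  hf := π⁻¹.injective.comp (Fin.castLE_injective _)
  cond := ((minRemoved_eq_iff _).1 rfl).2

theorem toInjPair_eq_iff {P : InjPair n} (ha : P.a ≤ n) :
    toInjPair π = P ↔ ⇑π⁻¹ ∘ Fin.castLE ha = P.f ∧ isTerm n P.a π := by
  constructor
  · rintro rfl
    exact ⟨rfl, isTerm_minRemoved π⟩
  · obtain ⟨a, _, f, _, cond⟩ := P
    dsimp only at ha ⊢
    rintro ⟨rfl, hterm⟩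
    obtain rfl : minRemoved π = a := (minRemoved_eq_iff _).2 ⟨hterm, cond⟩
    rfl

theorem toInjPair_bijective : Function.Bijective (toInjPair (n := n)) := by
  refine (Function.bijective_iff_existsUnique _).2 fun P => ?_
  simp only [toInjPair_eq_iff P.a_le, isTerm_iff_strictMonoOn P.a_le]
  exact (Equiv.inv (Equiv.Perm (Fin n))).bijective.existsUnique_iff.2
    (existsUnique_equiv_comp_eq_strictMonoOn rfl (Fin.castLE_injective P.a_le) P.hf)

end InjPair

/-- The map `π ↦ (m(π) - 1, π⁻¹ restricted to the cards 1, …, m(π)-1)` is a bijection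
between `Sₙ` and the pairs `(a, f)` above; in particular there are `n!` such pairs. -/
theorem perm_equiv_injPair (n : ℕ) (hn : 1 ≤ n) :
    (∃ e : Equiv.Perm (Fin n) ≃ InjPair n,
      ∀ π : Equiv.Perm (Fin n),
        (e π).a = mval n π - 1 ∧
        ∀ i : Fin ((e π).a),
          (e π).f i = π⁻¹ ⟨(i : ℕ), by
            have h1 := i.isLt
            have h2 := (e π).ha
            omega⟩) ∧
    Nat.card (InjPair n) = Nat.factorial n := by
  refine ⟨⟨.ofBijective toInjPair toInjPair_bijective,
    fun π => ⟨(mval_sub_one π).symm, fun _ => rfl⟩⟩, ?_⟩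
  rw [← Nat.card_congr (.ofBijective toInjPair toInjPair_bijective), Nat.card_perm, Nat.card_fin]
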